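/- arXiv:1303.5835 — 2 statements merged into one kernel-verified Lean document; each statement's English description precedes it below -/
import Mathlib

section
/- Let μ be a Borel probability measure on ℝ^d admitting a density p with respect to Lebesgue measure that is strictly positive and continuously differentiable on all of ℝ^d, with p and its first-order partial derivatives of exponential decay at infinity. Then there exists a continuously differentiable bijection U from (0,1)^d onto ℝ^d (a C¹ diffeomorphism) such that: (i) the pushforward of the uniform probability measure on (0,1)^d under U equals μ (equivalently, if η₁,…,η_d are independent uniform random variables on (0,1), then U(η₁,…,η_d) has law μ); (ii) the Jacobian matrix of U is triangular: ∂U_i/∂z_j(z) = 0 whenever j > i, so that U_i depends only on (z₁,…,z_i); and (iii) the diagonal entries never vanish: ∂U_i/∂z_i(z) ≠ 0 for all z ∈ (0,1)^d and all i. -/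
open MeasureTheory
open scoped ENNReal NNReal

noncomputable section

/-- The open unit cube `(0,1)^d` in `ℝ^d`. -/
def unitCube (d : ℕ) : Set (Fin d → ℝ) := Set.univ.pi fun _ => Set.Ioo (0 : ℝ) 1

/-!
Rosenblatt's transformation sends `x` to the vector of conditional distribution functions
`Fᵢ(xᵢ | x₁, …, xᵢ₋₁)` of `μ`. Its Jacobian matrix is lower triangular with the conditional
densities on the diagonal, and their product telescopes to `p`; so it is a diffeomorphism of `ℝ^d`
onto the cube carrying `μ` to the uniform distribution, and `U` is its inverse. Integrating out the
last coordinate reduces the dimension by one: exponential decay justifies differentiating under the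
integral sign, and the marginal density decays exponentially again.
-/

open Set Filter Topology

section ExpDecay

variable {E F G : Type*} [NormedAddCommGroup E] [NormedAddCommGroup F] [NormedAddCommGroup G]

/-- Exponential decay of a function at infinity, with global constants. -/
def HasExpDecay (f : E → F) : Prop :=
  ∃ c ε : ℝ, 0 ≤ c ∧ 0 < ε ∧ ∀ x, ‖f x‖ ≤ c * Real.exp (-ε * ‖x‖)

lemma integrable_exp_neg_mul_abs {ε : ℝ} (hε : 0 < ε) :
    Integrable fun t : ℝ => Real.exp (-ε * |t|) := by
  have h := integrable_fun_norm_addHaar (volume : Measure ℝ) (f := fun r => Real.exp (-ε * r))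
  simp only [Module.finrank_self, tsub_self, pow_zero, one_smul, Real.norm_eq_abs] at h
  exact h.2 (exp_neg_integrableOn_Ioi 0 hε)

namespace HasExpDecay

variable {f : E → F}

lemma of_norm_le_mul (hf : HasExpDecay f) {g : E → G} {C : ℝ} (hC : 0 ≤ C)
    (hg : ∀ x, ‖g x‖ ≤ C * ‖f x‖) : HasExpDecay g := by
  obtain ⟨c, ε, hc, hε, hb⟩ := hf
  refine ⟨C * c, ε, mul_nonneg hC hc, hε, fun x => ?_⟩
  calc ‖g x‖ ≤ C * ‖f x‖ := hg x
    _ ≤ C * (c * Real.exp (-ε * ‖x‖)) := by gcongr; exact hb x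
    _ = C * c * Real.exp (-ε * ‖x‖) := by ring

lemma comp_of_norm_eq (hf : HasExpDecay f) {σ : G → E} (hσ : ∀ x, ‖σ x‖ = ‖x‖) :
    HasExpDecay (f ∘ σ) := by
  obtain ⟨c, ε, hc, hε, hb⟩ := hf
  exact ⟨c, ε, hc, hε, fun x => hσ x ▸ hb (σ x)⟩

variable [NormedSpace ℝ E]

lemma exists_integrable_bound_line (hf : HasExpDecay f) {e : E} (he : e ≠ 0) (y₀ : E) :
    ∃ b : ℝ → ℝ, Integrable b ∧ ∀ y ∈ Metric.ball y₀ 1, ∀ t : ℝ, ‖f (y + t • e)‖ ≤ b t := by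
  obtain ⟨c, ε, hc, hε, hb⟩ := hf
  refine ⟨fun t => c * Real.exp (ε * (‖y₀‖ + 1)) * Real.exp (-(ε * ‖e‖) * |t|),
    (integrable_exp_neg_mul_abs (by positivity)).const_mul _, fun y hy t => (hb _).trans ?_⟩
  have hy' : ‖y‖ ≤ ‖y₀‖ + 1 := by
    linarith [norm_sub_norm_le y y₀, mem_ball_iff_norm.1 hy]
  have ht : |t| * ‖e‖ ≤ ‖y + t • e‖ + ‖y‖ := by
    simpa [norm_smul] using norm_sub_le (y + t • e) y
  have hexp : -ε * ‖y + t • e‖ ≤ ε * (‖y₀‖ + 1) + -(ε * ‖e‖) * |t| := by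
    linarith [mul_le_mul_of_nonneg_left (ht.trans (add_le_add_right hy' _)) hε.le]
  beta_reduce
  rw [mul_assoc, ← Real.exp_add]
  gcongr

lemma integrable_line (hf : HasExpDecay f) (hcont : Continuous f) {e : E} (he : e ≠ 0) (y : E) :
    Integrable fun t : ℝ => f (y + t • e) := by
  obtain ⟨b, hbi, hb⟩ := hf.exists_integrable_bound_line he y
  exact hbi.mono' (by fun_prop : Continuous _).aestronglyMeasurable
    (.of_forall (hb y (Metric.mem_ball_self one_pos)))

variable [NormedSpace ℝ F]

lemma continuous_setIntegral_line (hf : HasExpDecay f) (hcont : Continuous f) {e : E}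
    (he : e ≠ 0) (S : Set ℝ) : Continuous fun y => ∫ t in S, f (y + t • e) := by
  refine continuous_iff_continuousAt.2 fun y₀ => ?_
  obtain ⟨b, hbi, hb⟩ := hf.exists_integrable_bound_line he y₀
  refine continuousAt_of_dominated (bound := b) ?_ ?_ hbi.integrableOn ?_
  · exact .of_forall fun y => (hf.integrable_line hcont he y).integrableOn.aestronglyMeasurable
  · filter_upwards [Metric.ball_mem_nhds y₀ one_pos] with y hy using .of_forall (hb y hy)
  · exact .of_forall fun t => by fun_prop

lemma hasFDerivAt_setIntegral_line (hf : HasExpDecay f) (hf' : HasExpDecay (fderiv ℝ f))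
    (hC1 : ContDiff ℝ 1 f) {e : E} (he : e ≠ 0) (S : Set ℝ) (y₀ : E) :
    HasFDerivAt (fun y => ∫ t in S, f (y + t • e)) (∫ t in S, fderiv ℝ f (y₀ + t • e)) y₀ := by
  obtain ⟨b, hbi, hb⟩ := hf'.exists_integrable_bound_line he y₀
  have hline := hf.integrable_line hC1.continuous he
  refine hasFDerivAt_integral_of_dominated_of_fderiv_le (bound := b)
    (F' := fun y t => fderiv ℝ f (y + t • e)) (Metric.ball_mem_nhds y₀ one_pos)
    ?_ (hline y₀).integrableOn ?_ ?_ hbi.integrableOn ?_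
  · exact .of_forall fun y => (hline y).integrableOn.aestronglyMeasurable
  · exact (hf'.integrable_line (hC1.continuous_fderiv one_ne_zero) he
      y₀).integrableOn.aestronglyMeasurable
  · exact .of_forall fun t y hy => hb y hy t
  · exact .of_forall fun t y _ => (hasFDerivAt_comp_add_right (t • e)).2
      (hC1.differentiable one_ne_zero (y + t • e)).hasFDerivAt

lemma contDiff_setIntegral_line (hf : HasExpDecay f) (hf' : HasExpDecay (fderiv ℝ f))
    (hC1 : ContDiff ℝ 1 f) {e : E} (he : e ≠ 0) (S : Set ℝ) :
    ContDiff ℝ 1 fun y => ∫ t in S, f (y + t • e) :=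
  contDiff_one_iff_hasFDerivAt.2 ⟨fun y => ∫ t in S, fderiv ℝ f (y + t • e),
    hf'.continuous_setIntegral_line (hC1.continuous_fderiv one_ne_zero) he S,
    hf.hasFDerivAt_setIntegral_line hf' hC1 he S⟩

end HasExpDecay

end ExpDecay

section IntegralIic

lemma setIntegral_Iic_zero_comp_add_left {F : Type*} [NormedAddCommGroup F] [NormedSpace ℝ F]
    (f : ℝ → F) (s : ℝ) : ∫ t in Iic 0, f (s + t) = ∫ t in Iic s, f t := by
  simpa using (measurePreserving_add_left volume s).setIntegral_preimage_emb
    (measurableEmbedding_addLeft s) f (Iic s)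

variable {f : ℝ → ℝ}

lemma hasDerivAt_integral_Iic (hf : Continuous f) (hi : Integrable f) (s : ℝ) :
    HasDerivAt (fun s => ∫ t in Iic s, f t) (f s) s := by
  have h : (fun s => ∫ t in Iic s, f t) = fun s => (∫ t in Iic 0, f t) + ∫ t in 0..s, f t := by
    ext s
    rw [← intervalIntegral.integral_Iic_sub_Iic hi.integrableOn hi.integrableOn, add_sub_cancel]
  rw [h]
  exact (hf.integral_hasStrictDerivAt 0 s).hasDerivAt.const_add _

lemma strictMono_integral_Iic (hf : Continuous f) (hi : Integrable f) (hpos : ∀ t, 0 < f t) :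
    StrictMono fun s => ∫ t in Iic s, f t :=
  strictMono_of_hasDerivAt_pos (hasDerivAt_integral_Iic hf hi) hpos

lemma range_integral_Iic (hf : Continuous f) (hi : Integrable f) (hpos : ∀ t, 0 < f t) :
    range (fun s => ∫ t in Iic s, f t) = Ioo 0 (∫ t, f t) := by
  have hmono := strictMono_integral_Iic hf hi hpos
  have hcont : Continuous fun s => ∫ t in Iic s, f t :=
    continuous_iff_continuousAt.2 fun s => (hasDerivAt_integral_Iic hf hi s).continuousAt
  have hbot : Tendsto (fun s => ∫ t in Iic s, f t) atBot (𝓝 0) :=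
    tendsto_integral_Iic_zero tendsto_id
  have htop : Tendsto (fun s => ∫ t in Iic s, f t) atTop (𝓝 (∫ t, f t)) :=
    (aecover_Iic tendsto_id).integral_tendsto_of_countably_generated hi
  refine Subset.antisymm ?_ fun a ha => ?_
  · rintro _ ⟨s, rfl⟩
    exact ⟨(hmono.monotone.le_of_tendsto hbot (s - 1)).trans_lt (hmono (sub_one_lt s)),
      (hmono (lt_add_one s)).trans_le (hmono.monotone.ge_of_tendsto htop (s + 1))⟩
  · obtain ⟨s₁, h₁⟩ := (hbot.eventually_lt_const ha.1).exists
    obtain ⟨s₂, h₂⟩ := (htop.eventually_const_lt ha.2).exists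
    exact mem_range_of_exists_le_of_exists_ge hcont ⟨s₁, h₁.le⟩ ⟨s₂, h₂.le⟩

end IntegralIic

section Marginal

variable {E F : Type*} [NormedAddCommGroup E] [NormedAddCommGroup F] [NormedSpace ℝ F]

/-- The marginal of `p` on the first factor, obtained by integrating out the last variable.
Vector values are allowed so that it also applies to the derivative of a density. -/
def marginal (p : E × ℝ → F) (x : E) : F := ∫ t, p (x, t)

lemma HasExpDecay.marginal {p : E × ℝ → F} (hp : HasExpDecay p) : HasExpDecay (marginal p) := by
  obtain ⟨c, ε, hc, hε, hb⟩ := hp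
  have hK : Integrable fun t : ℝ => Real.exp (-(ε / 2) * |t|) :=
    integrable_exp_neg_mul_abs (half_pos hε)
  have hsplit (x : E) (t : ℝ) :
      ‖p (x, t)‖ ≤ c * Real.exp (-(ε / 2) * ‖x‖) * Real.exp (-(ε / 2) * |t|) := by
    have hmax : ‖x‖ + |t| ≤ 2 * ‖(x, t)‖ := by
      linarith [norm_fst_le (x, t), norm_snd_le (x, t), Real.norm_eq_abs t]
    have hexp : -ε * ‖(x, t)‖ ≤ -(ε / 2) * ‖x‖ + -(ε / 2) * |t| := by
      linarith [mul_le_mul_of_nonneg_left hmax (half_pos hε).le]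
    refine (hb (x, t)).trans ?_
    rw [mul_assoc, ← Real.exp_add]
    gcongr
  refine ⟨c * ∫ t : ℝ, Real.exp (-(ε / 2) * |t|), ε / 2,
    mul_nonneg hc (integral_nonneg fun t => (Real.exp_pos _).le), half_pos hε, fun x => ?_⟩
  calc ‖_root_.marginal p x‖
      ≤ ∫ t : ℝ, c * Real.exp (-(ε / 2) * ‖x‖) * Real.exp (-(ε / 2) * |t|) :=
        norm_integral_le_of_norm_le (hK.const_mul _) (.of_forall (hsplit x))
    _ = c * (∫ t : ℝ, Real.exp (-(ε / 2) * |t|)) * Real.exp (-(ε / 2) * ‖x‖) := by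
        rw [integral_const_mul]; ring

/-- The conditional distribution function `s ↦ P(last variable ≤ s | first variable = x)` of the
(not necessarily normalised) density `p` on `E × ℝ`, as a function of `(x, s)`. -/
def conditionalCDF (p : E × ℝ → ℝ) (z : E × ℝ) : ℝ :=
  (∫ t in Iic z.2, p (z.1, t)) / marginal p z.1

lemma zero_one_ne_zero : ((0 : E), (1 : ℝ)) ≠ 0 := by simp

variable [NormedSpace ℝ E]

lemma add_smul_zero_one (z : E × ℝ) (t : ℝ) : z + t • ((0 : E), (1 : ℝ)) = (z.1, z.2 + t) := by
  ext <;> simp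

lemma marginal_eq_setIntegral_line (p : E × ℝ → F) (x : E) :
    marginal p x = ∫ t : ℝ in univ, p ((x, (0 : ℝ)) + t • ((0 : E), (1 : ℝ))) := by
  simp only [marginal, setIntegral_univ, add_smul_zero_one, zero_add]

lemma setIntegral_Iic_eq_setIntegral_line (p : E × ℝ → F) (z : E × ℝ) :
    ∫ t in Iic z.2, p (z.1, t) = ∫ t : ℝ in Iic 0, p (z + t • ((0 : E), (1 : ℝ))) := by
  simp only [add_smul_zero_one, setIntegral_Iic_zero_comp_add_left fun t => p (z.1, t)]

/-- The class of (unnormalised) densities to which the construction applies; it is stable under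
passing to marginals. -/
structure IsDecayingDensity (p : E → ℝ) : Prop where
  pos : ∀ x, 0 < p x
  contDiff : ContDiff ℝ 1 p
  hasExpDecay : HasExpDecay p
  hasExpDecay_fderiv : HasExpDecay (fderiv ℝ p)

namespace IsDecayingDensity

lemma comp_linearIsometryEquiv {G : Type*} [NormedAddCommGroup G] [NormedSpace ℝ G] {p : E → ℝ}
    (hp : IsDecayingDensity p) (σ : G ≃ₗᵢ[ℝ] E) : IsDecayingDensity (p ∘ σ) where
  pos x := hp.pos (σ x)
  contDiff := hp.contDiff.comp σ.contDiff
  hasExpDecay := hp.hasExpDecay.comp_of_norm_eq σ.norm_map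
  hasExpDecay_fderiv := by
    refine (hp.hasExpDecay_fderiv.comp_of_norm_eq σ.norm_map).of_norm_le_mul
      (norm_nonneg (σ : G →L[ℝ] E)) fun x => ?_
    have h : fderiv ℝ (p ∘ σ) x = (fderiv ℝ p (σ x)).comp (σ : G →L[ℝ] E) :=
      σ.toContinuousLinearEquiv.comp_right_fderiv
    rw [h, mul_comm]
    exact ContinuousLinearMap.opNorm_comp_le _ _

variable {p : E × ℝ → ℝ}

lemma continuous_section (hp : IsDecayingDensity p) (x : E) : Continuous fun t => p (x, t) :=
  hp.contDiff.continuous.comp (by fun_prop)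

lemma integrable_section (hp : IsDecayingDensity p) (x : E) : Integrable fun t => p (x, t) := by
  simpa only [add_smul_zero_one, zero_add] using
    hp.hasExpDecay.integrable_line hp.contDiff.continuous zero_one_ne_zero (x, 0)

lemma hasFDerivAt_marginal (hp : IsDecayingDensity p) (x : E) :
    HasFDerivAt (_root_.marginal p)
      ((_root_.marginal (fderiv ℝ p) x).comp (ContinuousLinearMap.inl ℝ E ℝ)) x := by
  simp only [funext (marginal_eq_setIntegral_line p), marginal_eq_setIntegral_line (fderiv ℝ p)]
  exact HasFDerivAt.comp (f := fun x : E => (x, (0 : ℝ))) x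
    (hp.hasExpDecay.hasFDerivAt_setIntegral_line hp.hasExpDecay_fderiv hp.contDiff
      zero_one_ne_zero univ (x, 0)) (hasFDerivAt_prodMk_left x 0)

lemma marginal (hp : IsDecayingDensity p) : IsDecayingDensity (_root_.marginal p) where
  pos x := by
    have hmem := (range_integral_Iic (hp.continuous_section x) (hp.integrable_section x)
      fun t => hp.pos (x, t)).subset (mem_range_self 0)
    exact hmem.1.trans hmem.2
  contDiff := by
    rw [funext (marginal_eq_setIntegral_line p)]
    exact (hp.hasExpDecay.contDiff_setIntegral_line hp.hasExpDecay_fderiv hp.contDiff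
      zero_one_ne_zero univ).comp (contDiff_prodMk_left (0 : ℝ))
  hasExpDecay := hp.hasExpDecay.marginal
  hasExpDecay_fderiv := by
    refine hp.hasExpDecay_fderiv.marginal.of_norm_le_mul
      (norm_nonneg (ContinuousLinearMap.inl ℝ E ℝ)) fun x => ?_
    rw [(hp.hasFDerivAt_marginal x).fderiv, mul_comm]
    exact ContinuousLinearMap.opNorm_comp_le _ _

lemma contDiff_conditionalCDF (hp : IsDecayingDensity p) : ContDiff ℝ 1 (conditionalCDF p) := by
  refine ContDiff.div ?_ (hp.marginal.contDiff.comp contDiff_fst) fun z => (hp.marginal.pos z.1).ne'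
  rw [funext (setIntegral_Iic_eq_setIntegral_line p)]
  exact hp.hasExpDecay.contDiff_setIntegral_line hp.hasExpDecay_fderiv hp.contDiff
    zero_one_ne_zero (Iic 0)

lemma strictMono_conditionalCDF (hp : IsDecayingDensity p) (x : E) :
    StrictMono fun s => conditionalCDF p (x, s) := fun _ _ hst =>
  div_lt_div_of_pos_right (strictMono_integral_Iic (hp.continuous_section x)
    (hp.integrable_section x) (fun t => hp.pos (x, t)) hst) (hp.marginal.pos x)

lemma range_conditionalCDF (hp : IsDecayingDensity p) (x : E) :
    range (fun s => conditionalCDF p (x, s)) = Ioo 0 1 := by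
  have hq := hp.marginal.pos x
  calc range (fun s => conditionalCDF p (x, s))
      = (fun u => u / _root_.marginal p x) '' range fun s => ∫ t in Iic s, p (x, t) :=
        range_comp (fun u => u / _root_.marginal p x) fun s => ∫ t in Iic s, p (x, t)
    _ = (fun u => u / _root_.marginal p x) '' Ioo 0 (_root_.marginal p x) := by
        rw [range_integral_Iic (hp.continuous_section x) (hp.integrable_section x)
          fun t => hp.pos (x, t)]
        rfl
    _ = Ioo 0 1 := by
        simp only [div_eq_mul_inv, image_mul_right_Ioo 0 _ (inv_pos.2 hq), zero_mul,
          mul_inv_cancel₀ hq.ne']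

lemma fderiv_conditionalCDF_zero_one (hp : IsDecayingDensity p) (z : E × ℝ) :
    fderiv ℝ (conditionalCDF p) z (0, 1) = p z / _root_.marginal p z.1 := by
  have hF := (hp.contDiff_conditionalCDF.differentiable one_ne_zero z).hasFDerivAt
  have hcurve : HasDerivAt (fun s => (z.1, s)) ((0 : E), (1 : ℝ)) z.2 :=
    (hasDerivAt_const z.2 z.1).prodMk (hasDerivAt_id z.2)
  have hline : HasDerivAt (fun s => conditionalCDF p (z.1, s))
      (fderiv ℝ (conditionalCDF p) z (0, 1)) z.2 :=
    HasFDerivAt.comp_hasDerivAt (f := fun s => (z.1, s)) z.2 hF hcurve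
  have hcdf : HasDerivAt (fun s => conditionalCDF p (z.1, s)) (p z / _root_.marginal p z.1) z.2 :=
    (hasDerivAt_integral_Iic (hp.continuous_section z.1) (hp.integrable_section z.1) z.2).div_const
      (_root_.marginal p z.1)
  exact hline.unique hcdf

end IsDecayingDensity

end Marginal

section Snoc

/-- Appending a last coordinate, as an isometry for the sup norms. -/
def snocIsometry (n : ℕ) : (Fin n → ℝ) × ℝ ≃ₗᵢ[ℝ] (Fin (n + 1) → ℝ) where
  toFun z := Fin.snoc z.1 z.2
  invFun y := (Fin.init y, y (Fin.last n))
  map_add' z w := by ext i; cases i using Fin.lastCases <;> simp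
  map_smul' c z := by ext i; cases i using Fin.lastCases <;> simp
  left_inv z := by simp
  right_inv y := by simp
  norm_map' z := by
    refine le_antisymm ((pi_norm_le_iff_of_nonneg (norm_nonneg z)).2 fun i => ?_)
      (max_le ((pi_norm_le_iff_of_nonneg (norm_nonneg _)).2 fun i => ?_) ?_)
    · cases i using Fin.lastCases with
      | last => simpa using norm_snd_le z
      | cast i => simpa using (norm_le_pi_norm z.1 i).trans (norm_fst_le z)
    · simpa using norm_le_pi_norm (Fin.snoc z.1 z.2 : Fin (n + 1) → ℝ) i.castSucc
    · simpa using norm_le_pi_norm (Fin.snoc z.1 z.2 : Fin (n + 1) → ℝ) (Fin.last n)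

variable {n : ℕ}

@[simp]
lemma snocIsometry_castSucc (z : (Fin n → ℝ) × ℝ) (i : Fin n) :
    snocIsometry n z i.castSucc = z.1 i :=
  Fin.snoc_castSucc (α := fun _ => ℝ) z.2 z.1 i

@[simp]
lemma snocIsometry_last (z : (Fin n → ℝ) × ℝ) : snocIsometry n z (Fin.last n) = z.2 :=
  Fin.snoc_last (α := fun _ => ℝ) z.2 z.1

lemma snocIsometry_symm_single_castSucc (j : Fin n) :
    (snocIsometry n).symm (Pi.single j.castSucc 1) = (Pi.single j 1, 0) := by
  rw [LinearIsometryEquiv.symm_apply_eq]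
  ext i
  cases i using Fin.lastCases <;> simp [Pi.single_apply]

lemma snocIsometry_symm_single_last :
    (snocIsometry n).symm (Pi.single (Fin.last n) 1) = (0, 1) := by
  rw [LinearIsometryEquiv.symm_apply_eq]
  ext i
  cases i using Fin.lastCases <;> simp

lemma measurePreserving_snocIsometry : MeasurePreserving (snocIsometry n) := by
  have h : ⇑(snocIsometry n) =
      (MeasurableEquiv.piFinSuccAbove (fun _ => ℝ) (Fin.last n)).symm ∘ Prod.swap := by
    ext z i
    cases i using Fin.lastCases <;> simp [MeasurableEquiv.piFinSuccAbove]
  rw [h]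
  exact (volume_preserving_piFinSuccAbove (fun _ => ℝ) (Fin.last n)).symm.comp
    Measure.measurePreserving_swap

lemma integral_marginal_comp_snocIsometry {F : Type*} [NormedAddCommGroup F] [NormedSpace ℝ F]
    {p : (Fin (n + 1) → ℝ) → F} (hp : Integrable p) :
    ∫ x, marginal (p ∘ snocIsometry n) x = ∫ y, p y := by
  have hm := measurePreserving_snocIsometry (n := n)
  rw [← hm.integral_comp (snocIsometry n).toHomeomorph.measurableEmbedding]
  exact (integral_prod _ (hm.integrable_comp_of_integrable hp)).symm

lemma unitCube_succ : unitCube (n + 1) = snocIsometry n '' (unitCube n ×ˢ Ioo 0 1) := by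
  ext y
  obtain ⟨z, rfl⟩ := (snocIsometry n).surjective y
  rw [(snocIsometry n).injective.mem_set_image]
  simp [unitCube, Fin.forall_fin_succ']

end Snoc

section Jacobian

/-- The Jacobian matrix `(∂fᵢ/∂xⱼ)` of a map between coordinate spaces. -/
def jacobian {ι κ : Type*} [Fintype ι] [Fintype κ] [DecidableEq κ] (f : (κ → ℝ) → ι → ℝ)
    (x : κ → ℝ) : Matrix ι κ ℝ :=
  LinearMap.toMatrix' (fderiv ℝ f x : (κ → ℝ) →ₗ[ℝ] ι → ℝ)

lemma jacobian_apply {ι κ : Type*} [Fintype ι] [Fintype κ] [DecidableEq κ] (f : (κ → ℝ) → ι → ℝ)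
    (x : κ → ℝ) (i : ι) (j : κ) : jacobian f x i j = fderiv ℝ f x (Pi.single j 1) i :=
  LinearMap.toMatrix'_apply _ i j

lemma det_jacobian {ι : Type*} [Fintype ι] [DecidableEq ι] (f : (ι → ℝ) → ι → ℝ) (x : ι → ℝ) :
    (jacobian f x).det = (fderiv ℝ f x).det :=
  LinearMap.det_toMatrix' _

end Jacobian

section SkewProduct

/-- The map `(x, t) ↦ (g x, F (x, t))`, which acts on the first factor alone and then on each
fibre. -/
def skewProduct {α β γ δ : Type*} (g : α → γ) (F : α × β → δ) (z : α × β) : γ × δ := (g z.1, F z)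

section Set

variable {α β γ δ : Type*} {g : α → γ} {F : α × β → δ}

lemma injective_skewProduct (hg : g.Injective) (hF : ∀ x, Function.Injective fun t => F (x, t)) :
    (skewProduct g F).Injective := by
  rintro ⟨x, s⟩ ⟨y, t⟩ h
  obtain rfl : x = y := hg (congrArg Prod.fst h)
  obtain rfl : s = t := hF x (congrArg Prod.snd h)
  rfl

lemma range_skewProduct {T : Set δ} (hF : ∀ x, range (fun t => F (x, t)) = T) :
    range (skewProduct g F) = range g ×ˢ T := by
  ext ⟨a, b⟩
  constructor
  · rintro ⟨⟨x, t⟩, h⟩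
    obtain ⟨rfl, rfl⟩ := Prod.ext_iff.1 h
    exact ⟨mem_range_self x, hF x ▸ mem_range_self t⟩
  · rintro ⟨⟨x, rfl⟩, hb⟩
    obtain ⟨t, rfl⟩ := (hF x).symm ▸ hb
    exact ⟨(x, t), rfl⟩

end Set

/-- The skew product of `g` and `F`, read in the coordinates of `Fin (n + 1) → ℝ`. -/
def snocSkewProduct {n : ℕ} (g : (Fin n → ℝ) → Fin n → ℝ) (F : (Fin n → ℝ) × ℝ → ℝ) :
    (Fin (n + 1) → ℝ) → Fin (n + 1) → ℝ :=
  snocIsometry n ∘ skewProduct g F ∘ (snocIsometry n).symm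

variable {n : ℕ} {g : (Fin n → ℝ) → Fin n → ℝ} {F : (Fin n → ℝ) × ℝ → ℝ}

lemma contDiff_snocSkewProduct {k : WithTop ℕ∞} (hg : ContDiff ℝ k g) (hF : ContDiff ℝ k F) :
    ContDiff ℝ k (snocSkewProduct g F) :=
  (snocIsometry n).contDiff.comp
    (((hg.comp contDiff_fst).prodMk hF).comp (snocIsometry n).symm.contDiff)

lemma injective_snocSkewProduct (hg : g.Injective)
    (hF : ∀ x, Function.Injective fun t => F (x, t)) : (snocSkewProduct g F).Injective :=
  (snocIsometry n).injective.comp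
    ((injective_skewProduct hg hF).comp (snocIsometry n).symm.injective)

lemma range_snocSkewProduct (hg : range g = unitCube n)
    (hF : ∀ x, range (fun t => F (x, t)) = Ioo 0 1) :
    range (snocSkewProduct g F) = unitCube (n + 1) := by
  rw [snocSkewProduct, range_comp, (snocIsometry n).symm.surjective.range_comp,
    range_skewProduct hF, hg, unitCube_succ]

lemma fderiv_snocSkewProduct (hg : Differentiable ℝ g) (hF : Differentiable ℝ F)
    (z : (Fin n → ℝ) × ℝ) (v : Fin (n + 1) → ℝ) :
    fderiv ℝ (snocSkewProduct g F) (snocIsometry n z) v = snocIsometry n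
      (fderiv ℝ g z.1 ((snocIsometry n).symm v).1, fderiv ℝ F z ((snocIsometry n).symm v)) := by
  have hskew : HasFDerivAt (skewProduct g F)
      (((fderiv ℝ g z.1).comp (.fst ℝ _ ℝ)).prod (fderiv ℝ F z)) z :=
    ((hg z.1).hasFDerivAt.comp z hasFDerivAt_fst).prodMk (hF z).hasFDerivAt
  rw [← (snocIsometry n).symm_apply_apply z] at hskew
  have h : HasFDerivAt (snocSkewProduct g F) _ (snocIsometry n z) :=
    ((snocIsometry n).toContinuousLinearEquiv.hasFDerivAt.comp _ hskew).comp _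
      (snocIsometry n).symm.toContinuousLinearEquiv.hasFDerivAt
  rw [h.fderiv]
  simp

variable (hg : Differentiable ℝ g) (hF : Differentiable ℝ F) (z : (Fin n → ℝ) × ℝ)
include hg hF

lemma jacobian_snocSkewProduct_castSucc_castSucc (i j : Fin n) :
    jacobian (snocSkewProduct g F) (snocIsometry n z) i.castSucc j.castSucc =
      jacobian g z.1 i j := by
  simp [jacobian_apply, fderiv_snocSkewProduct hg hF, snocIsometry_symm_single_castSucc]

lemma jacobian_snocSkewProduct_castSucc_last (i : Fin n) :
    jacobian (snocSkewProduct g F) (snocIsometry n z) i.castSucc (Fin.last n) = 0 := by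
  simp [jacobian_apply, fderiv_snocSkewProduct hg hF, snocIsometry_symm_single_last]

lemma jacobian_snocSkewProduct_last_last :
    jacobian (snocSkewProduct g F) (snocIsometry n z) (Fin.last n) (Fin.last n) =
      fderiv ℝ F z (0, 1) := by
  simp [jacobian_apply, fderiv_snocSkewProduct hg hF, snocIsometry_symm_single_last]

lemma isLowerTriangular_jacobian_snocSkewProduct (h : (jacobian g z.1).IsLowerTriangular) :
    (jacobian (snocSkewProduct g F) (snocIsometry n z)).IsLowerTriangular := by
  intro i j hij
  replace hij : i < j := hij
  obtain ⟨i, rfl⟩ := Fin.exists_castSucc_eq.2 (hij.trans_le (Fin.le_last j)).ne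
  cases j using Fin.lastCases with
  | last => exact jacobian_snocSkewProduct_castSucc_last hg hF z i
  | cast j =>
    rw [jacobian_snocSkewProduct_castSucc_castSucc hg hF z]
    exact h (Fin.castSucc_lt_castSucc_iff.1 hij)

lemma det_jacobian_snocSkewProduct (h : (jacobian g z.1).IsLowerTriangular) :
    (jacobian (snocSkewProduct g F) (snocIsometry n z)).det =
      (jacobian g z.1).det * fderiv ℝ F z (0, 1) := by
  rw [Matrix.det_of_isLowerTriangular _ (isLowerTriangular_jacobian_snocSkewProduct hg hF z h),
    Matrix.det_of_isLowerTriangular _ h, Fin.prod_univ_castSucc]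
  simp only [jacobian_snocSkewProduct_castSucc_castSucc hg hF z,
    jacobian_snocSkewProduct_last_last hg hF z]

end SkewProduct

section RosenblattTransform

/-- `G` is a Rosenblatt transform for the density `p` on `ℝ^d`: a triangular `C¹` injection onto
the open unit cube whose Jacobian determinant is `p`, so that it carries `p dx` to the uniform
distribution. -/
structure IsRosenblattTransform {d : ℕ} (p : (Fin d → ℝ) → ℝ) (G : (Fin d → ℝ) → Fin d → ℝ) :
    Prop where
  contDiff : ContDiff ℝ 1 G
  injective : G.Injective
  range_eq : range G = unitCube d
  isLowerTriangular_jacobian : ∀ x, (jacobian G x).IsLowerTriangular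
  det_jacobian : ∀ x, (jacobian G x).det = p x

lemma IsRosenblattTransform.snoc {n : ℕ} {p : (Fin n → ℝ) × ℝ → ℝ} (hp : IsDecayingDensity p)
    {g : (Fin n → ℝ) → Fin n → ℝ} (hg : IsRosenblattTransform (marginal p) g) :
    IsRosenblattTransform (p ∘ (snocIsometry n).symm) (snocSkewProduct g (conditionalCDF p)) where
  contDiff := contDiff_snocSkewProduct hg.contDiff hp.contDiff_conditionalCDF
  injective := injective_snocSkewProduct hg.injective fun x =>
    (hp.strictMono_conditionalCDF x).injective
  range_eq := range_snocSkewProduct hg.range_eq hp.range_conditionalCDF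
  isLowerTriangular_jacobian := (snocIsometry n).surjective.forall.2 fun z =>
    isLowerTriangular_jacobian_snocSkewProduct (hg.contDiff.differentiable one_ne_zero)
      (hp.contDiff_conditionalCDF.differentiable one_ne_zero) z (hg.isLowerTriangular_jacobian z.1)
  det_jacobian := (snocIsometry n).surjective.forall.2 fun z => by
    rw [det_jacobian_snocSkewProduct (hg.contDiff.differentiable one_ne_zero)
      (hp.contDiff_conditionalCDF.differentiable one_ne_zero) z (hg.isLowerTriangular_jacobian z.1),
      hg.det_jacobian, hp.fderiv_conditionalCDF_zero_one, Function.comp_apply,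
      LinearIsometryEquiv.symm_apply_apply, mul_div_cancel₀ _ (hp.marginal.pos z.1).ne']

lemma isRosenblattTransform_id {p : (Fin 0 → ℝ) → ℝ} (hp : ∫ x, p x = 1) :
    IsRosenblattTransform p id where
  contDiff := contDiff_id
  injective := Function.injective_id
  range_eq := range_id.trans (eq_univ_of_forall fun _ i => i.elim0).symm
  isLowerTriangular_jacobian _ i := i.elim0
  det_jacobian x := by
    rw [Matrix.det_isEmpty, ← hp, volume_pi, Measure.pi_of_empty _ x, integral_dirac]

theorem exists_isRosenblattTransform : ∀ {d : ℕ} {p : (Fin d → ℝ) → ℝ},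
    IsDecayingDensity p → ∫ x, p x = 1 → ∃ G, IsRosenblattTransform p G
  | 0, _, _, hint => ⟨id, isRosenblattTransform_id hint⟩
  | n + 1, p, hp, hint => by
    have hpσ := hp.comp_linearIsometryEquiv (snocIsometry n)
    have hmarg : ∫ x, marginal (p ∘ snocIsometry n) x = 1 :=
      (integral_marginal_comp_snocIsometry (integrable_of_integral_eq_one hint)).trans hint
    obtain ⟨g, hg⟩ := exists_isRosenblattTransform hpσ.marginal hmarg
    have hG := hg.snoc hpσ
    rw [Function.comp_assoc, (snocIsometry n).self_comp_symm, Function.comp_id] at hG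
    exact ⟨_, hG⟩

end RosenblattTransform

section GlobalInverse

variable {𝕜 E F : Type*} [RCLike 𝕜] [NormedAddCommGroup E] [NormedSpace 𝕜 E] [CompleteSpace E]
  [NormedAddCommGroup F] [NormedSpace 𝕜 F] {k : WithTop ℕ∞} {f : E → F} {g : F → E}

lemma isOpenEmbedding_of_contDiff (hf : ContDiff 𝕜 k f) (hk : k ≠ 0)
    (hf' : ∀ x, (fderiv 𝕜 f x).IsInvertible) (hinj : f.Injective) : IsOpenEmbedding f := by
  choose f' hff' using hf'
  refine .of_continuous_injective_isOpenMap hf.continuous hinj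
    (isOpenMap_of_hasStrictFDerivAt_equiv (𝕜 := 𝕜) (f' := f') fun x => ?_)
  rw [hff']
  exact hf.contDiffAt.hasStrictFDerivAt hk

lemma contDiffAt_of_leftInverse (hgf : Function.LeftInverse g f) (hf : ContDiff 𝕜 k f)
    (hk : k ≠ 0) (hf' : ∀ x, (fderiv 𝕜 f x).IsInvertible) (x : E) : ContDiffAt 𝕜 k g (f x) := by
  have hopen := isOpenEmbedding_of_contDiff hf hk hf' hgf.injective
  obtain ⟨f', hff'⟩ := hf' x
  set e := hopen.toOpenPartialHomeomorph f
  have hx : e.symm (f x) = x := hopen.toOpenPartialHomeomorph_left_inv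
  have he : ContDiffAt 𝕜 k e.symm (f x) := by
    refine e.contDiffAt_symm (f₀' := f') ?_ ?_ ?_
    · exact (hopen.toOpenPartialHomeomorph_target f).symm ▸ mem_range_self x
    · rw [hx, hff']
      exact (hf.differentiable hk x).hasFDerivAt
    · exact hf.contDiffAt
  refine he.congr_of_eventuallyEq ?_
  filter_upwards [hopen.isOpen_range.mem_nhds (mem_range_self x)] with _ ⟨y, hy⟩
  rw [← hy, hgf y]
  exact hopen.toOpenPartialHomeomorph_left_inv.symm

end GlobalInverse

section JacobianInverse

variable {ι : Type*} [Fintype ι] [DecidableEq ι] {f g : (ι → ℝ) → ι → ℝ} {x : ι → ℝ}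

lemma jacobian_mul_jacobian_of_leftInverse (hgf : Function.LeftInverse g f)
    (hg : DifferentiableAt ℝ g (f x)) (hf : DifferentiableAt ℝ f x) :
    jacobian g (f x) * jacobian f x = 1 := by
  rw [jacobian, jacobian, ← LinearMap.toMatrix'_comp, ← ContinuousLinearMap.toLinearMap_comp,
    ← fderiv_comp x hg hf, hgf.comp_eq_id, fderiv_id]
  exact LinearMap.toMatrix'_id

lemma isInvertible_fderiv_of_det_jacobian_ne_zero (h : (jacobian f x).det ≠ 0) :
    (fderiv ℝ f x).IsInvertible := by
  rw [det_jacobian] at h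
  exact ⟨(fderiv ℝ f x).toContinuousLinearEquivOfDetNeZero h,
    (fderiv ℝ f x).coe_toContinuousLinearEquivOfDetNeZero h⟩

end JacobianInverse

lemma diag_ne_zero_of_isLowerTriangular {ι R : Type*} [Fintype ι] [LinearOrder ι] [CommRing R]
    {M : Matrix ι ι R} (hM : M.IsLowerTriangular) (hdet : M.det ≠ 0) (i : ι) : M i i ≠ 0 := by
  intro h
  rw [Matrix.det_of_isLowerTriangular M hM] at hdet
  exact hdet (Finset.prod_eq_zero (Finset.mem_univ i) h)

namespace IsRosenblattTransform

variable {d : ℕ} {p : (Fin d → ℝ) → ℝ} {G U : (Fin d → ℝ) → Fin d → ℝ}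
  (hG : IsRosenblattTransform p G)
include hG

lemma bijOn_leftInverse (hU : Function.LeftInverse U G) : BijOn U (unitCube d) univ := by
  rw [← hG.range_eq]
  exact ⟨mapsTo_univ _ _, hU.rightInvOn_range.injOn, fun x _ => ⟨G x, mem_range_self x, hU x⟩⟩

variable (hp : ∀ x, 0 < p x)
include hp

lemma det_jacobian_ne_zero (x : Fin d → ℝ) : (jacobian G x).det ≠ 0 :=
  hG.det_jacobian x ▸ (hp x).ne'

lemma isInvertible_fderiv (x : Fin d → ℝ) : (fderiv ℝ G x).IsInvertible :=
  isInvertible_fderiv_of_det_jacobian_ne_zero (hG.det_jacobian_ne_zero hp x)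

lemma map_withDensity :
    (volume.withDensity fun x => ENNReal.ofReal (p x)).map G = volume.restrict (unitCube d) := by
  have h := map_withDensity_abs_det_fderiv_eq_addHaar volume nullMeasurableSet_univ
    (fun x _ => (hG.contDiff.differentiable one_ne_zero x).hasFDerivAt.hasFDerivWithinAt)
    hG.injective.injOn
  simpa only [← _root_.det_jacobian, hG.det_jacobian, abs_of_pos (hp _), Measure.restrict_univ,
    image_univ, hG.range_eq] using h

lemma exists_measurable_leftInverse : ∃ U, Measurable U ∧ Function.LeftInverse U G :=
  have hemb := isOpenEmbedding_of_contDiff hG.contDiff one_ne_zero (hG.isInvertible_fderiv hp)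
    hG.injective
  ⟨Function.extend G id 0, hemb.measurableEmbedding.measurable_extend measurable_id measurable_zero,
    hG.injective.extend_apply id 0⟩

variable (hU : Function.LeftInverse U G)
include hU

lemma contDiffOn_leftInverse : ContDiffOn ℝ 1 U (unitCube d) := by
  rw [← hG.range_eq]
  rintro _ ⟨x, rfl⟩
  exact (contDiffAt_of_leftInverse hU hG.contDiff one_ne_zero
    (hG.isInvertible_fderiv hp) x).contDiffWithinAt

lemma map_leftInverse (hUm : Measurable U) :
    (volume.restrict (unitCube d)).map U = volume.withDensity fun x => ENNReal.ofReal (p x) := by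
  rw [← hG.map_withDensity hp, Measure.map_map hUm hG.contDiff.continuous.measurable,
    hU.comp_eq_id, Measure.map_id]

lemma jacobian_leftInverse_mul (x : Fin d → ℝ) : jacobian U (G x) * jacobian G x = 1 :=
  jacobian_mul_jacobian_of_leftInverse hU
    ((contDiffAt_of_leftInverse hU hG.contDiff one_ne_zero
      (hG.isInvertible_fderiv hp) x).differentiableAt one_ne_zero)
    (hG.contDiff.differentiable one_ne_zero x)

lemma isLowerTriangular_jacobian_leftInverse {z : Fin d → ℝ} (hz : z ∈ unitCube d) :
    (jacobian U z).IsLowerTriangular := by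
  obtain ⟨x, rfl⟩ := hG.range_eq.symm.subset hz
  have hmul := hG.jacobian_leftInverse_mul hp hU x
  have : Invertible (jacobian G x) := invertibleOfLeftInverse _ _ hmul
  rw [← Matrix.inv_eq_left_inv hmul]
  exact Matrix.blockTriangular_inv_of_blockTriangular (hG.isLowerTriangular_jacobian x)

lemma jacobian_leftInverse_diag_ne_zero {z : Fin d → ℝ} (hz : z ∈ unitCube d) (i : Fin d) :
    jacobian U z i i ≠ 0 := by
  refine diag_ne_zero_of_isLowerTriangular
    (hG.isLowerTriangular_jacobian_leftInverse hp hU hz) ?_ i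
  obtain ⟨x, rfl⟩ := hG.range_eq.symm.subset hz
  exact Matrix.det_ne_zero_of_right_inverse (hG.jacobian_leftInverse_mul hp hU x)

end IsRosenblattTransform

lemma isOpen_unitCube (d : ℕ) : IsOpen (unitCube d) :=
  isOpen_set_pi finite_univ fun _ _ => isOpen_Ioo

lemma integral_eq_one_of_isProbabilityMeasure_withDensity {α : Type*} [MeasurableSpace α]
    {ν : Measure α} {p : α → ℝ} (hp : ∀ x, 0 ≤ p x) (hpm : AEStronglyMeasurable p ν)
    [IsProbabilityMeasure (ν.withDensity fun x => ENNReal.ofReal (p x))] :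
    ∫ x, p x ∂ν = 1 := by
  rw [integral_eq_lintegral_of_nonneg_ae (.of_forall hp) hpm, ← setLIntegral_univ,
    ← withDensity_apply _ MeasurableSet.univ, measure_univ, ENNReal.toReal_one]

/-- **Knothe–Rosenblatt map.** Let `μ` be a Borel probability measure on `ℝ^d`
with a strictly positive continuously differentiable density `p` such that `p` and its
first-order derivatives decay exponentially at infinity. Then there is a continuously
differentiable bijection `U` from `(0,1)^d` onto `ℝ^d` such that: (i) `U` pushes the uniform
probability measure on `(0,1)^d` forward to `μ`; (ii) the Jacobian of `U` is triangular:
`∂U_i/∂z_j = 0` for `j > i`; (iii) the diagonal entries `∂U_i/∂z_i` never vanish on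
`(0,1)^d`. -/
theorem knothe_rosenblatt_map
    {d : ℕ} (μ : Measure (Fin d → ℝ)) [IsProbabilityMeasure μ]
    (p : (Fin d → ℝ) → ℝ)
    (hdensity : μ = volume.withDensity fun x => ENNReal.ofReal (p x))
    (hpos : ∀ x, 0 < p x)
    (hC1 : ContDiff ℝ 1 p)
    (hdecay : ∃ c ε : ℝ, 0 < c ∧ 0 < ε ∧ ∀ x : Fin d → ℝ,
      p x ≤ c * Real.exp (-ε * ‖x‖) ∧ ‖fderiv ℝ p x‖ ≤ c * Real.exp (-ε * ‖x‖)) :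
    ∃ (U : (Fin d → ℝ) → (Fin d → ℝ))
      (DU : (Fin d → ℝ) → ((Fin d → ℝ) →L[ℝ] (Fin d → ℝ))),
      Measurable U ∧
      -- `U` is one-to-one from `(0,1)^d` onto `ℝ^d`
      Set.InjOn U (unitCube d) ∧ U '' unitCube d = Set.univ ∧
      -- `U` is continuously differentiable on `(0,1)^d`, with derivative `DU`
      ContDiffOn ℝ 1 U (unitCube d) ∧
      (∀ z ∈ unitCube d, HasFDerivAt U (DU z) z) ∧
      ContinuousOn DU (unitCube d) ∧
      -- (i) `U` pushes the uniform distribution on the cube forward to `μ`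
      Measure.map U (volume.restrict (unitCube d)) = μ ∧
      -- (ii) the Jacobian matrix is triangular: `∂U_i/∂z_j = 0` whenever `j > i`
      (∀ z ∈ unitCube d, ∀ i j : Fin d, i < j → DU z (Pi.single j 1) i = 0) ∧
      -- (iii) the diagonal entries never vanish
      (∀ z ∈ unitCube d, ∀ i : Fin d, DU z (Pi.single i 1) i ≠ 0) := by
  subst hdensity
  obtain ⟨c, ε, hc, hε, hb⟩ := hdecay
  have hp : IsDecayingDensity p :=
    { pos := hpos
      contDiff := hC1
      hasExpDecay := ⟨c, ε, hc.le, hε, fun x => (Real.norm_of_nonneg (hpos x).le).trans_le (hb x).1⟩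
      hasExpDecay_fderiv := ⟨c, ε, hc.le, hε, fun x => (hb x).2⟩ }
  obtain ⟨G, hG⟩ := exists_isRosenblattTransform hp
    (integral_eq_one_of_isProbabilityMeasure_withDensity (fun x => (hpos x).le)
      hC1.continuous.aestronglyMeasurable)
  obtain ⟨U, hUm, hU⟩ := hG.exists_measurable_leftInverse hpos
  have hUC := hG.contDiffOn_leftInverse hpos hU
  have hdiff := hUC.differentiableOn one_ne_zero
  have hcube := isOpen_unitCube d
  exact ⟨U, fderiv ℝ U, hUm, (hG.bijOn_leftInverse hU).injOn, (hG.bijOn_leftInverse hU).image_eq,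
    hUC, fun z hz => hdiff.hasFDerivAt (hcube.mem_nhds hz),
    hUC.continuousOn_fderiv_of_isOpen hcube le_rfl, hG.map_leftInverse hpos hU hUm,
    fun z hz i j hij => jacobian_apply U z i j ▸
      hG.isLowerTriangular_jacobian_leftInverse hpos hU hz hij,
    fun z hz i => jacobian_apply U z i i ▸ hG.jacobian_leftInverse_diag_ne_zero hpos hU hz i⟩
end
end

section
/- Let T > 0 and let (X_t)_{0 ≤ t ≤ T} and (Y_t)_{0 ≤ t ≤ T} be ℝ^d-valued stochastic processes on a probability space (Ω,F,P), both with continuous sample paths, satisfying sup_{0 ≤ t ≤ T} E[|X_t|] < ∞ and sup_{0 ≤ t ≤ T} E[|Y_t|] < ∞. Suppose there is a constant C such that, for each t ∈ [0,T], there exists a C-Lipschitz map w(t,·) : ℝ^d → ℝ^d with P(Y_t = w(t,X_t)) = 1. Then there exists a jointly Borel-measurable map v : [0,T] × ℝ^d → ℝ^d such that v(t,·) is C-Lipschitz for every t ∈ [0,T], sup_{0 ≤ t ≤ T} |v(t,0)| < ∞, and P(for all t ∈ [0,T], Y_t = v(t,X_t)) = 1. -/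
open MeasureTheory ProbabilityTheory
open scoped ENNReal NNReal

noncomputable section

/-- `ℝ^d`. -/
abbrev Rd (d : ℕ) := EuclideanSpace ℝ (Fin d)

/-!
Discretize time by simple functions `τ n t → t`, and let `v t` be a cluster point of the maps
`w (τ n t)`. Almost surely the relation `Y = w(X)` holds at all the countably many times in the
ranges of the `τ n`. For one such `ω` it forces the maps `w (τ n t)`, which are `C`-Lipschitz, to
send `x` into a compact set, because the paths of `X` and `Y` are bounded; so by Tychonoff's
theorem they live in a compact space, which is metrizable since a Lipschitz map is determined by
its values on a countable dense set. The cluster point can be chosen measurably in `t`: the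
compact metrizable space is the image of the Cantor set under a continuous map with a measurable
section, and in `ℝ` the upper limit is a measurable choice of cluster point. Continuity of the
paths then transports `Y = w(X)` from the discrete times to all times.
-/

open Filter Function Set Topology TopologicalSpace

section MeasurableSelection

variable {L K α : Type*} [TopologicalSpace L] [MeasurableSpace L] [BorelSpace L]
  [SecondCountableTopology L] [TopologicalSpace K] [MeasurableSpace K] [BorelSpace K]
  [MeasurableSpace α]

theorem exists_measurable_rightInverse_of_isCompact [LinearOrder L] [OrderTopology L] [T2Space K]
    {Z : Set L} (hZ : IsCompact Z) {k : Z → K} (hk : Continuous k) (hk_surj : Surjective k) :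
    ∃ c : K → Z, Measurable c ∧ RightInverse c k := by
  have : CompactSpace Z := isCompact_iff_compactSpace.1 hZ
  -- Choosing the least point of each fiber makes the section lower semicontinuous.
  have exists_least (y : K) : ∃ z : Z, IsLeast (k ⁻¹' {y}) z :=
    (isClosed_singleton.preimage hk).isCompact.exists_isLeast (hk_surj y)
  choose c hc using exists_least
  refine ⟨c, Measurable.subtype_mk (f := fun y => (c y : L)) (measurable_of_Iic fun a => ?_)
    (h := fun y => (c y).2), fun y => (hc y).1⟩
  have sublevel_eq : (fun y => (c y : L)) ⁻¹' Iic a = k '' {z | (z : L) ≤ a} := by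
    ext y
    refine ⟨fun hy => ⟨c y, hy, (hc y).1⟩, ?_⟩
    rintro ⟨z, hza, rfl⟩
    exact le_trans ((hc (k z)).2 rfl) hza
  rw [sublevel_eq]
  exact (isClosed_Iic.preimage continuous_subtype_val).isCompact.image hk |>.measurableSet

theorem exists_measurable_mapClusterPt_of_isCompact [ConditionallyCompleteLinearOrder L]
    [OrderTopology L] {Z : Set L} (hZ : IsCompact Z) {u : ℕ → α → Z}
    (hu : ∀ n, Measurable (u n)) :
    ∃ g : α → Z, Measurable g ∧ ∀ a, MapClusterPt (g a) atTop (u · a) := by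
  have hcluster (a : α) :
      MapClusterPt (limsup (fun n => (u n a : L)) atTop) atTop (fun n => (u n a : L)) := by
    have : Nonempty L := ⟨u 0 a⟩
    obtain ⟨lo, hlo⟩ := hZ.bddBelow
    obtain ⟨hi, hhi⟩ := hZ.bddAbove
    exact MapClusterPt.limsup
      (isBoundedUnder_of ⟨lo, fun n => hlo (u n a).2⟩ :
        IsBoundedUnder (· ≥ ·) atTop _).isCoboundedUnder_le
      (isBoundedUnder_of ⟨hi, fun n => hhi (u n a).2⟩)
  have hmem (a : α) : limsup (fun n => (u n a : L)) atTop ∈ Z :=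
    hZ.isClosed.closure_subset <| (hcluster a).clusterPt.mem_closure_of_mem _ <|
      eventually_map.2 <| .of_forall fun n => (u n a).2
  refine ⟨fun a => ⟨_, hmem a⟩, ?_, fun a => ?_⟩
  · exact (Measurable.limsup fun n => measurable_subtype_coe.comp (hu n)).subtype_mk
  · exact IsInducing.subtypeVal.mapClusterPt_iff.1 (mapClusterPt_comp.1 (hcluster a))

theorem exists_continuous_measurable_rightInverse_cantorSet (K : Type*) [TopologicalSpace K]
    [CompactSpace K] [MetrizableSpace K] [Nonempty K] [MeasurableSpace K] [BorelSpace K] :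
    ∃ (k : cantorSet → K) (c : K → cantorSet),
      Continuous k ∧ Measurable c ∧ RightInverse c k := by
  let := metrizableSpaceMetric K
  obtain ⟨f, hf, hf_surj⟩ := exists_nat_bool_continuous_surjective_of_compact K
  have hk := hf.comp cantorSetHomeomorphNatToBool.continuous
  have hk_surj := hf_surj.comp cantorSetHomeomorphNatToBool.surjective
  obtain ⟨c, hc, hck⟩ := exists_measurable_rightInverse_of_isCompact isCompact_cantorSet hk hk_surj
  exact ⟨_, c, hk, hc, hck⟩

theorem exists_measurable_mapClusterPt [CompactSpace K] [MetrizableSpace K] {u : ℕ → α → K}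
    (hu : ∀ n, Measurable (u n)) :
    ∃ g : α → K, Measurable g ∧ ∀ a, MapClusterPt (g a) atTop (u · a) := by
  rcases isEmpty_or_nonempty α with _ | ⟨⟨a₀⟩⟩
  · exact ⟨isEmptyElim, measurable_of_empty _, isEmptyElim⟩
  have : Nonempty K := ⟨u 0 a₀⟩
  obtain ⟨k, c, hk, hc, hck⟩ := exists_continuous_measurable_rightInverse_cantorSet K
  obtain ⟨g, hg, hgu⟩ :=
    exists_measurable_mapClusterPt_of_isCompact isCompact_cantorSet fun n => hc.comp (hu n)
  refine ⟨k ∘ g, hk.measurable.comp hg, fun a => ?_⟩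
  simpa only [comp_def, hck _] using (hgu a).continuousAt_comp hk.continuousAt

end MeasurableSelection

section FunctionSpaces

variable {E F α : Type*}

theorem isClosedEmbedding_domRestrict_of_dense [TopologicalSpace E] [TopologicalSpace F]
    [T2Space F] {A : Set (E → F)} (hA : IsCompact A) (hA_cont : ∀ f ∈ A, Continuous f) {D : Set E}
    (hD : Dense D) : IsClosedEmbedding fun f : A => D.domRestrict f.1 := by
  have : CompactSpace A := isCompact_iff_compactSpace.1 hA
  have hcont : Continuous fun f : A => D.domRestrict f.1 :=
    continuous_pi fun x => (continuous_apply (x : E)).comp continuous_subtype_val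
  refine hcont.isClosedEmbedding fun f g hfg => Subtype.ext ?_
  exact (hA_cont _ f.2).ext_on hD (hA_cont _ g.2) (Set.domRestrict_eq_domRestrict_iff.1 hfg)

variable [MeasurableSpace α] [MeasurableSpace E] [MeasurableSpace F]

theorem exists_measurable_uncurry_mapClusterPt [TopologicalSpace E] [MetrizableSpace E]
    [SecondCountableTopology E] [OpensMeasurableSpace E] [TopologicalSpace F] [MetrizableSpace F]
    [SecondCountableTopology F] [BorelSpace F] {A : Set (E → F)} (hA : IsCompact A)
    (hA_cont : ∀ f ∈ A, Continuous f) {u : ℕ → α → E → F}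
    (hu : ∀ n x, Measurable fun a => u n a x) (huA : ∀ n a, u n a ∈ A) :
    ∃ v : α → E → F, Measurable (uncurry v) ∧
      ∀ a, v a ∈ A ∧ MapClusterPt (v a) atTop (u · a) := by
  obtain ⟨D, hD_countable, hD⟩ := exists_countable_dense E
  have : Countable D := hD_countable
  have hr := isClosedEmbedding_domRestrict_of_dense hA hA_cont hD
  have : CompactSpace A := isCompact_iff_compactSpace.1 hA
  have : MetrizableSpace A := hr.isEmbedding.metrizableSpace
  let : MeasurableSpace A := borel A
  have : BorelSpace A := ⟨rfl⟩
  have hu_meas (n : ℕ) : Measurable fun a => (⟨u n a, huA n a⟩ : A) :=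
    hr.measurableEmbedding.measurable_comp_iff.1 (measurable_pi_lambda _ fun x => hu n x)
  obtain ⟨g, hg, hgu⟩ := exists_measurable_mapClusterPt hu_meas
  have hg_eval (x : E) : Measurable fun a => (g a).1 x :=
    ((continuous_apply x).comp continuous_subtype_val).measurable.comp hg
  refine ⟨fun a => g a, ?_, fun a =>
    ⟨(g a).2, (hgu a).continuousAt_comp continuous_subtype_val.continuousAt⟩⟩
  exact (measurable_uncurry_of_continuous_of_measurable (fun a => hA_cont _ (g a).2)
    hg_eval).comp measurable_swap

theorem exists_measurable_lipschitzWith_mapClusterPt [MetricSpace E] [SecondCountableTopology E]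
    [OpensMeasurableSpace E] [MetricSpace F] [SecondCountableTopology F] [BorelSpace F] {C : ℝ≥0}
    {u : ℕ → α → E → F} (hu : ∀ n x, Measurable fun a => u n a x)
    (hu_lip : ∀ n a, LipschitzWith C (u n a)) {B : E → Set F} (hB : ∀ x, IsCompact (B x))
    (huB : ∀ n a x, u n a x ∈ B x) :
    ∃ v : α → E → F, Measurable (uncurry v) ∧
      ∀ a, LipschitzWith C (v a) ∧ (∀ x, v a x ∈ B x) ∧ MapClusterPt (v a) atTop (u · a) := by
  have hA : IsCompact ({f | LipschitzWith C f} ∩ Set.univ.pi B) :=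
    (isCompact_univ_pi hB).inter_left (isClosed_setOfPred_lipschitzWith C)
  obtain ⟨v, hv, hvu⟩ := exists_measurable_uncurry_mapClusterPt hA
    (fun f hf => LipschitzWith.continuous hf.1) hu fun n a => ⟨hu_lip n a, fun x _ => huB n a x⟩
  exact ⟨v, hv, fun a => ⟨(hvu a).1.1, fun x => (hvu a).1.2 x trivial, (hvu a).2⟩⟩

end FunctionSpaces

section Interpolation

variable {ι E F : Type*} [PseudoMetricSpace E] {C : ℝ≥0}

theorem exists_isCompact_forall_lipschitzWith_mem [TopologicalSpace ι] [PseudoMetricSpace F]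
    [ProperSpace F] {S : Set ι} (hS : IsCompact S) {ξ : ι → E} {η : ι → F}
    (hξ : ContinuousOn ξ S) (hη : ContinuousOn η S) (x : E) :
    ∃ B : Set F, IsCompact B ∧
      ∀ t ∈ S, ∀ f : E → F, LipschitzWith C f → η t = f (ξ t) → f x ∈ B := by
  obtain ⟨R, hR⟩ := hS.bddAbove_image
    (by fun_prop : ContinuousOn (fun t => (C : ℝ) * dist x (ξ t)) S)
  refine ⟨Metric.cthickening R (η '' S), (hS.image_of_continuousOn hη).cthickening,
    fun t ht f hf hηf => ?_⟩
  refine Metric.mem_cthickening_of_dist_le _ _ _ _ (mem_image_of_mem η ht) ?_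
  calc dist (f x) (η t) = dist (f x) (f (ξ t)) := by rw [hηf]
    _ ≤ C * dist x (ξ t) := hf.dist_le_mul _ _
    _ ≤ R := hR (mem_image_of_mem _ ht)

theorem eq_apply_of_mapClusterPt_of_lipschitzWith [MetricSpace F] {l : Filter ι} {f : ι → E → F}
    {ξ : ι → E} {η : ι → F} {g : E → F} {x : E} {y : F} (hf : ∀ i, LipschitzWith C (f i))
    (hηf : ∀ i, η i = f i (ξ i)) (hξ : Tendsto ξ l (𝓝 x)) (hη : Tendsto η l (𝓝 y))
    (hg : MapClusterPt g l f) : y = g x := by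
  have hdist : Tendsto (fun i => dist (η i) (f i x)) l (𝓝 0) := by
    refine squeeze_zero (fun _ => dist_nonneg)
      (fun i => hηf i ▸ (hf i).dist_le_mul (ξ i) x) ?_
    simpa using (tendsto_iff_dist_tendsto_zero.1 hξ).const_mul (C : ℝ)
  have hfx : Tendsto (fun i => f i x) l (𝓝 y) := hη.congr_dist hdist
  have hgx : MapClusterPt (g x) l (fun i => f i x) :=
    hg.continuousAt_comp (continuous_apply x).continuousAt
  exact (eq_of_nhds_neBot (hgx.clusterPt.mono hfx).neBot).symm

end Interpolation

theorem exists_simpleFunc_tendsto_nhdsWithin {ι : Type*} [PseudoEMetricSpace ι]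
    [MeasurableSpace ι] [OpensMeasurableSpace ι] {S : Set ι} (hS : IsSeparable S)
    (hS_nonempty : S.Nonempty) :
    ∃ τ : ℕ → SimpleFunc ι ι,
      (∀ n t, τ n t ∈ S) ∧ ∀ t ∈ S, Tendsto (τ · t) atTop (𝓝[S] t) := by
  obtain ⟨t₀, ht₀⟩ := hS_nonempty
  have : SeparableSpace S := hS.separableSpace
  have hmem := SimpleFunc.approxOn_mem measurable_id ht₀
  exact ⟨SimpleFunc.approxOn id measurable_id S t₀ ht₀, hmem, fun t ht =>
    tendsto_nhdsWithin_iff.2 ⟨SimpleFunc.tendsto_approxOn measurable_id ht₀ (subset_closure ht),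
      .of_forall fun n => hmem n t⟩⟩

theorem joint_decoupling_field_general {ι E F Ω : Type*} [PseudoEMetricSpace ι]
    [MeasurableSpace ι] [OpensMeasurableSpace ι] [MetricSpace E] [SecondCountableTopology E]
    [MeasurableSpace E] [OpensMeasurableSpace E] [MetricSpace F] [ProperSpace F]
    [MeasurableSpace F] [BorelSpace F] [MeasurableSpace Ω] {P : Measure Ω} [NeZero P] {S : Set ι}
    (hS : IsCompact S) (hS_nonempty : S.Nonempty) {X : ι → Ω → E} {Y : ι → Ω → F}
    (hX : ∀ᵐ ω ∂P, ContinuousOn (X · ω) S) (hY : ∀ᵐ ω ∂P, ContinuousOn (Y · ω) S) {C : ℝ≥0}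
    (hw : ∀ t ∈ S, ∃ w : E → F, LipschitzWith C w ∧ ∀ᵐ ω ∂P, Y t ω = w (X t ω)) :
    ∃ v : ι → E → F,
      Measurable (uncurry v) ∧
      (∀ t, LipschitzWith C (v t)) ∧
      (∀ x, Bornology.IsBounded (range (v · x))) ∧
      ∀ᵐ ω ∂P, ∀ t ∈ S, Y t ω = v t (X t ω) := by
  obtain ⟨τ, hτS, hτ⟩ := exists_simpleFunc_tendsto_nhdsWithin hS.isSeparable hS_nonempty
  obtain ⟨ω₀⟩ := nonempty_of_neBot (ae P)
  have : Nonempty F := hS_nonempty.to_type.map (Y · ω₀)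
  choose! w hw_lip hwXY using hw
  have hτXY : ∀ᵐ ω ∂P, ∀ n, ∀ s ∈ range (τ n), Y s ω = w s (X s ω) :=
    ae_all_iff.2 fun n => (ae_ball_iff (τ n).finite_range.countable).2 <|
      forall_mem_range.2 fun t => hwXY _ (hτS n t)
  obtain ⟨ω₁, hX₁, hY₁, hτ₁⟩ := (hX.and (hY.and hτXY)).exists
  choose B hB hwB using exists_isCompact_forall_lipschitzWith_mem (C := C) hS hX₁ hY₁
  obtain ⟨v, hv_meas, hv⟩ := exists_measurable_lipschitzWith_mapClusterPt
    (u := fun n t => w (τ n t)) (fun n x => ((τ n).map (w · x)).measurable)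
    (fun n t => hw_lip _ (hτS n t)) hB
    (fun n t x => hwB x _ (hτS n t) _ (hw_lip _ (hτS n t)) (hτ₁ n _ (mem_range_self t)))
  refine ⟨v, hv_meas, fun t => (hv t).1, fun x =>
    (hB x).isBounded.subset (range_subset_iff.2 fun t => (hv t).2.1 x), ?_⟩
  filter_upwards [hX, hY, hτXY] with ω hXω hYω hω t ht
  exact eq_apply_of_mapClusterPt_of_lipschitzWith (fun n => hw_lip _ (hτS n t))
    (fun n => hω n _ (mem_range_self t)) ((hXω t ht).tendsto.comp (hτ t ht))
    ((hYω t ht).tendsto.comp (hτ t ht)) (hv t).2.2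

/-- Let `(X_t)_{0≤t≤T}` and `(Y_t)_{0≤t≤T}` be `ℝ^d`-valued processes with
continuous sample paths and `sup_{t ≤ T} E|X_t| < ∞`, `sup_{t ≤ T} E|Y_t| < ∞`. If there is a
constant `C` such that for each `t ∈ [0,T]` there exists a `C`-Lipschitz map `w(t,·)` with
`P(Y_t = w(t,X_t)) = 1`, then there exists a jointly Borel-measurable `v : [0,T] × ℝ^d → ℝ^d`
with `v(t,·)` `C`-Lipschitz for every `t`, `sup_{t ≤ T} |v(t,0)| < ∞`, and
`P(∀ t ∈ [0,T], Y_t = v(t,X_t)) = 1`. -/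
theorem joint_decoupling_field
    {d : ℕ} {Ω : Type} [MeasurableSpace Ω] (P : Measure Ω) [IsProbabilityMeasure P]
    (T : ℝ) (hT : 0 < T)
    (X Y : ℝ → Ω → Rd d)
    (hXmeas : ∀ t, Measurable (X t)) (hYmeas : ∀ t, Measurable (Y t))
    (hXcont : ∀ ω, ContinuousOn (fun t => X t ω) (Set.Icc 0 T))
    (hYcont : ∀ ω, ContinuousOn (fun t => Y t ω) (Set.Icc 0 T))
    (hXint : ∃ M : ℝ, ∀ t ∈ Set.Icc (0 : ℝ) T, ∫⁻ ω, ‖X t ω‖₊ ∂P ≤ ENNReal.ofReal M)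
    (hYint : ∃ M : ℝ, ∀ t ∈ Set.Icc (0 : ℝ) T, ∫⁻ ω, ‖Y t ω‖₊ ∂P ≤ ENNReal.ofReal M)
    (C : ℝ≥0)
    (hw : ∀ t ∈ Set.Icc (0 : ℝ) T, ∃ w : Rd d → Rd d,
      LipschitzWith C w ∧ ∀ᵐ ω ∂P, Y t ω = w (X t ω)) :
    ∃ v : ℝ → Rd d → Rd d,
      Measurable (Function.uncurry v) ∧
      (∀ t ∈ Set.Icc (0 : ℝ) T, LipschitzWith C (v t)) ∧
      (∃ M : ℝ, ∀ t ∈ Set.Icc (0 : ℝ) T, ‖v t 0‖ ≤ M) ∧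
      ∀ᵐ ω ∂P, ∀ t ∈ Set.Icc (0 : ℝ) T, Y t ω = v t (X t ω) := by
  obtain ⟨v, hv_meas, hv_lip, hv_bdd, hvXY⟩ :=
    joint_decoupling_field_general isCompact_Icc ⟨0, le_rfl, hT.le⟩ (.of_forall hXcont)
      (.of_forall hYcont) hw
  obtain ⟨M, hM⟩ := (hv_bdd 0).exists_norm_le
  exact ⟨v, hv_meas, fun t _ => hv_lip t, ⟨M, fun t _ => hM _ (mem_range_self t)⟩, hvXY⟩
end
end
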